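/- For each time t = 0,…,T−1 there exists a function f̃_t^2, independent of the strategy pair (g, ψ^2), such that along every realization of positive probability, Π_{t+1}^2 = f̃_t^2(Π_t^2, Γ_t^{[2,1]}, U_t^2, Z_{t+1}^2). Consequently, for any set P² of distributions in Δ(𝒳_{t+1} × 𝓛_{t+1}^{[1,2]}), P(Π_{t+1}^2 ∈ P² | M_t^2, Γ_{0:t}^{[2,1]}) = P(Π_{t+1}^2 ∈ P² | Π_t^2, U_t^2, Γ_t^{[2,1]}). -/

import Mathlib

/-!
Common framework: a two-agent sequential dynamic team with nested information
structure (Dave & Malikopoulos, "Structural results for decentralized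
stochastic control with a nested information structure").

* `X t` : state space at time `t`; `U1 t`, `U2 t` : action spaces of agents 1 and 2;
* `W t` : disturbance; `V1 t`, `V2 t` : measurement noises; `Y1 t`, `Y2 t` : observations.
* Dynamics `X_{t+1} = f t X_t U¹_t U²_t W_t`, observations `Y^k_t = h^k t X_t V^k_t`.
* Memories `M²_t = (Y²_{0:t}, U²_{0:t-1})`, `L_t^{[1,2]} = (Y¹_{0:t}, U¹_{0:t-1})`,
  `M¹_t = (L_t^{[1,2]}, M²_t)` (nested information).
* The primitive random variables are independent with given PMFs; the sample
  space for horizon `T` is `ΩT`, with the product mass function `mass`.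
-/

open scoped Classical
open Finset

namespace NestedTeam

noncomputable section

/-- Memory of agent 2 at time `t`: observations `Y²₀,…,Y²ₜ` and actions `U²₀,…,U²ₜ₋₁`. -/
abbrev M2 (Y2 U2 : ℕ → Type) (t : ℕ) : Type :=
  ((s : Fin (t + 1)) → Y2 s) × ((s : Fin t) → U2 s)

/-- The private information `L_t^{[1,2]} = M¹_t \ M²_t` of agent 1. -/
abbrev Lp (Y1 U1 : ℕ → Type) (t : ℕ) : Type :=
  ((s : Fin (t + 1)) → Y1 s) × ((s : Fin t) → U1 s)

/-- Memory of agent 1 at time `t` (nested information: it contains `M²_t`). -/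
abbrev M1 (Y1 Y2 U1 U2 : ℕ → Type) (t : ℕ) : Type :=
  Lp Y1 U1 t × M2 Y2 U2 t

/-- The system: dynamics, observation maps and per-stage cost. -/
structure Sys (X U1 U2 W V1 V2 Y1 Y2 : ℕ → Type) where
  f : ∀ t, X t → U1 t → U2 t → W t → X (t + 1)
  h1 : ∀ t, X t → V1 t → Y1 t
  h2 : ∀ t, X t → V2 t → Y2 t
  c : ∀ t, X t → U1 t → U2 t → ℝ

/-- A control strategy profile: `U¹_t = g1 t M¹_t`, `U²_t = g2 t M²_t`. -/
structure Strat (U1 U2 Y1 Y2 : ℕ → Type) where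
  g1 : ∀ t, M1 Y1 Y2 U1 U2 t → U1 t
  g2 : ∀ t, M2 Y2 U2 t → U2 t

/-- A realization of the primitive random variables. -/
structure Prim (X W V1 V2 : ℕ → Type) where
  x0 : X 0
  w : ∀ t, W t
  v1 : ∀ t, V1 t
  v2 : ∀ t, V2 t

variable {X U1 U2 W V1 V2 Y1 Y2 : ℕ → Type}

/-- The closed-loop trajectory: states `X_{0:t}` and actions `U^{1:2}_{0:t-1}`. -/
def hist (S : Sys X U1 U2 W V1 V2 Y1 Y2) (g : Strat U1 U2 Y1 Y2) (ρ : Prim X W V1 V2) :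
    (t : ℕ) → ((s : Fin (t + 1)) → X s) × ((s : Fin t) → U1 s × U2 s)
  | 0 => (Fin.cons (α := fun s : Fin 1 => X s) ρ.x0 (fun i => i.elim0), fun i => i.elim0)
  | t + 1 =>
    let p := hist S g ρ t
    let y1 : (s : Fin (t + 1)) → Y1 s := fun s => S.h1 s (p.1 s) (ρ.v1 s)
    let y2 : (s : Fin (t + 1)) → Y2 s := fun s => S.h2 s (p.1 s) (ρ.v2 s)
    let m1 : M1 Y1 Y2 U1 U2 t := ((y1, fun s => (p.2 s).1), (y2, fun s => (p.2 s).2))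
    let a1 := g.g1 t m1
    let a2 := g.g2 t m1.2
    (Fin.snoc (α := fun s : Fin (t + 2) => X s) p.1 (S.f t (p.1 (Fin.last t)) a1 a2 (ρ.w t)),
     Fin.snoc (α := fun s : Fin (t + 1) => U1 s × U2 s) p.2 (a1, a2))

/-- State `X_t` along the closed loop. -/
def xTraj (S : Sys X U1 U2 W V1 V2 Y1 Y2) (g : Strat U1 U2 Y1 Y2) (ρ : Prim X W V1 V2)
    (t : ℕ) : X t := (hist S g ρ t).1 (Fin.last t)

/-- `L_t^{[1,2]} = (Y¹_{0:t}, U¹_{0:t-1})` along the closed loop. -/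
def lpTraj (S : Sys X U1 U2 W V1 V2 Y1 Y2) (g : Strat U1 U2 Y1 Y2) (ρ : Prim X W V1 V2)
    (t : ℕ) : Lp Y1 U1 t :=
  (fun s => S.h1 s ((hist S g ρ t).1 s) (ρ.v1 s), fun s => ((hist S g ρ t).2 s).1)

/-- `M²_t = (Y²_{0:t}, U²_{0:t-1})` along the closed loop. -/
def m2Traj (S : Sys X U1 U2 W V1 V2 Y1 Y2) (g : Strat U1 U2 Y1 Y2) (ρ : Prim X W V1 V2)
    (t : ℕ) : M2 Y2 U2 t :=
  (fun s => S.h2 s ((hist S g ρ t).1 s) (ρ.v2 s), fun s => ((hist S g ρ t).2 s).2)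

/-- `M¹_t` along the closed loop. -/
def m1Traj (S : Sys X U1 U2 W V1 V2 Y1 Y2) (g : Strat U1 U2 Y1 Y2) (ρ : Prim X W V1 V2)
    (t : ℕ) : M1 Y1 Y2 U1 U2 t := (lpTraj S g ρ t, m2Traj S g ρ t)

/-- Action `U¹_t` along the closed loop. -/
def u1Traj (S : Sys X U1 U2 W V1 V2 Y1 Y2) (g : Strat U1 U2 Y1 Y2) (ρ : Prim X W V1 V2)
    (t : ℕ) : U1 t := g.g1 t (m1Traj S g ρ t)

/-- Action `U²_t` along the closed loop. -/
def u2Traj (S : Sys X U1 U2 W V1 V2 Y1 Y2) (g : Strat U1 U2 Y1 Y2) (ρ : Prim X W V1 V2)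
    (t : ℕ) : U2 t := g.g2 t (m2Traj S g ρ t)

/-- Observation `Y¹_t` along the closed loop. -/
def y1Traj (S : Sys X U1 U2 W V1 V2 Y1 Y2) (g : Strat U1 U2 Y1 Y2) (ρ : Prim X W V1 V2)
    (t : ℕ) : Y1 t := S.h1 t (xTraj S g ρ t) (ρ.v1 t)

/-- Observation `Y²_t` along the closed loop. -/
def y2Traj (S : Sys X U1 U2 W V1 V2 Y1 Y2) (g : Strat U1 U2 Y1 Y2) (ρ : Prim X W V1 V2)
    (t : ℕ) : Y2 t := S.h2 t (xTraj S g ρ t) (ρ.v2 t)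

/-- New information `Z¹_{t+1} = (Y¹_{t+1}, U¹_t, Y²_{t+1}, U²_t)` of agent 1. -/
def z1Traj (S : Sys X U1 U2 W V1 V2 Y1 Y2) (g : Strat U1 U2 Y1 Y2) (ρ : Prim X W V1 V2)
    (t : ℕ) : Y1 (t + 1) × U1 t × Y2 (t + 1) × U2 t :=
  (y1Traj S g ρ (t + 1), u1Traj S g ρ t, y2Traj S g ρ (t + 1), u2Traj S g ρ t)

/-- New information `Z²_{t+1} = (Y²_{t+1}, U²_t)` of agent 2. -/
def z2Traj (S : Sys X U1 U2 W V1 V2 Y1 Y2) (g : Strat U1 U2 Y1 Y2) (ρ : Prim X W V1 V2)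
    (t : ℕ) : Y2 (t + 1) × U2 t := (y2Traj S g ρ (t + 1), u2Traj S g ρ t)

/-- Sample space of primitive random variables for horizon `T`. -/
abbrev ΩT (X W V1 V2 : ℕ → Type) (T : ℕ) : Type :=
  X 0 × ((t : Fin (T + 1)) → W t) × ((t : Fin (T + 1)) → V1 t) × ((t : Fin (T + 1)) → V2 t)

/-- Extend a finite-horizon family to all times (by junk beyond the horizon). -/
def ext {α : ℕ → Type} [∀ t, Inhabited (α t)] (T : ℕ) (a : (t : Fin (T + 1)) → α t)
    (t : ℕ) : α t := if h : t < T + 1 then a ⟨t, h⟩ else default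

/-- The primitive realization corresponding to a sample point. -/
def toPrim [∀ t, Inhabited (W t)] [∀ t, Inhabited (V1 t)] [∀ t, Inhabited (V2 t)]
    (T : ℕ) (ω : ΩT X W V1 V2 T) : Prim X W V1 V2 :=
  ⟨ω.1, ext T ω.2.1, ext T ω.2.2.1, ext T ω.2.2.2⟩

/-- The (known) probability mass functions of the mutually independent primitive
random variables. -/
structure PrimPMF (X W V1 V2 : ℕ → Type) [Fintype (X 0)] [∀ t, Fintype (W t)]
    [∀ t, Fintype (V1 t)] [∀ t, Fintype (V2 t)] where
  pX0 : X 0 → ℝ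
  pW : ∀ t, W t → ℝ
  pV1 : ∀ t, V1 t → ℝ
  pV2 : ∀ t, V2 t → ℝ
  pX0_nonneg : ∀ x, 0 ≤ pX0 x
  pX0_sum : ∑ x, pX0 x = 1
  pW_nonneg : ∀ t w, 0 ≤ pW t w
  pW_sum : ∀ t, ∑ w, pW t w = 1
  pV1_nonneg : ∀ t v, 0 ≤ pV1 t v
  pV1_sum : ∀ t, ∑ v, pV1 t v = 1
  pV2_nonneg : ∀ t v, 0 ≤ pV2 t v
  pV2_sum : ∀ t, ∑ v, pV2 t v = 1

variable [Fintype (X 0)] [∀ t, Fintype (W t)] [∀ t, Fintype (V1 t)] [∀ t, Fintype (V2 t)]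
variable [∀ t, Inhabited (W t)] [∀ t, Inhabited (V1 t)] [∀ t, Inhabited (V2 t)]

/-- Product mass of a sample point (independent primitives). -/
def mass (P : PrimPMF X W V1 V2) (T : ℕ) (ω : ΩT X W V1 V2 T) : ℝ :=
  P.pX0 ω.1 * (∏ t : Fin (T + 1), P.pW t (ω.2.1 t)) *
    (∏ t : Fin (T + 1), P.pV1 t (ω.2.2.1 t)) * (∏ t : Fin (T + 1), P.pV2 t (ω.2.2.2 t))

/-- Elementary conditional probability `P(A | B)` on a finite sample space. -/
def condProb {Ω : Type*} [Fintype Ω] (P : Ω → ℝ) (A B : Ω → Prop) : ℝ :=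
  (∑ ω, if A ω ∧ B ω then P ω else 0) / (∑ ω, if B ω then P ω else 0)

/-- Elementary conditional expectation `E[F | B]` on a finite sample space. -/
def condExp {Ω : Type*} [Fintype Ω] (P : Ω → ℝ) (F : Ω → ℝ) (B : Ω → Prop) : ℝ :=
  (∑ ω, if B ω then P ω * F ω else 0) / (∑ ω, if B ω then P ω else 0)

/-- Agent 1's information state `Π¹_t = P(X_t = · | M¹_t)` at the realization `ω`. -/
def infoState1 (S : Sys X U1 U2 W V1 V2 Y1 Y2) (g : Strat U1 U2 Y1 Y2)
    (P : PrimPMF X W V1 V2) (T : ℕ) (ω : ΩT X W V1 V2 T) (t : ℕ) : X t → ℝ :=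
  fun x => condProb (mass P T)
    (fun ω' => xTraj S g (toPrim T ω') t = x)
    (fun ω' => m1Traj S g (toPrim T ω') t = m1Traj S g (toPrim T ω) t)

/-- Agent 2's information state `Π²_t = P((X_t, L_t^{[1,2]}) = · | M²_t)` at `ω`. -/
def infoState2 (S : Sys X U1 U2 W V1 V2 Y1 Y2) (g : Strat U1 U2 Y1 Y2)
    (P : PrimPMF X W V1 V2) (T : ℕ) (ω : ΩT X W V1 V2 T) (t : ℕ) :
    X t × Lp Y1 U1 t → ℝ :=
  fun sl => condProb (mass P T)
    (fun ω' => (xTraj S g (toPrim T ω') t, lpTraj S g (toPrim T ω') t) = sl)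
    (fun ω' => m2Traj S g (toPrim T ω') t = m2Traj S g (toPrim T ω) t)

/-- Per-stage cost along the closed loop. -/
def stageCost (S : Sys X U1 U2 W V1 V2 Y1 Y2) (g : Strat U1 U2 Y1 Y2) (ρ : Prim X W V1 V2)
    (t : ℕ) : ℝ := S.c t (xTraj S g ρ t) (u1Traj S g ρ t) (u2Traj S g ρ t)

/-- Expected cost-to-go `𝒥_{t₀}(g) = E[Σ_{t=t₀}^T c_t(X_t,U¹_t,U²_t)]`. -/
def costToGo (S : Sys X U1 U2 W V1 V2 Y1 Y2) (g : Strat U1 U2 Y1 Y2)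
    (P : PrimPMF X W V1 V2) (T t0 : ℕ) : ℝ :=
  ∑ ω : ΩT X W V1 V2 T, mass P T ω * ∑ t ∈ Finset.Icc t0 T, stageCost S g (toPrim T ω) t

/-- Expected total cost `𝒥(g) = E[Σ_{t=0}^T c_t(X_t,U¹_t,U²_t)]`. -/
def totalCost (S : Sys X U1 U2 W V1 V2 Y1 Y2) (g : Strat U1 U2 Y1 Y2)
    (P : PrimPMF X W V1 V2) (T : ℕ) : ℝ := costToGo S g P T 0

/-- `(g, ψ²)` is a compatible control/prescription pair: agent 1's action is
generated by the prescription `Γ_t^{[2,1]} = ψ_t(M²_t)` applied to `Π¹_t`. -/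
def Compat (S : Sys X U1 U2 W V1 V2 Y1 Y2) (g : Strat U1 U2 Y1 Y2)
    (ψ : ∀ t, M2 Y2 U2 t → (X t → ℝ) → U1 t) (P : PrimPMF X W V1 V2) (T : ℕ) : Prop :=
  ∀ t, t ≤ T → ∀ ω : ΩT X W V1 V2 T, 0 < mass P T ω →
    u1Traj S g (toPrim T ω) t =
      ψ t (m2Traj S g (toPrim T ω) t) (infoState1 S g P T ω t)

/-- The map `e_t` of Lemma 4: conditioning a joint distribution on
`𝒳_t × 𝓛_t^{[1,2]}` on its second component. -/
def eMap [∀ t, Fintype (X t)] (t : ℕ) (π2 : X t × Lp Y1 U1 t → ℝ) (l : Lp Y1 U1 t) :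
    X t → ℝ := fun x => π2 (x, l) / ∑ x', π2 (x', l)

/-!
Given `M²_t`, the triple `(X_{t+1}, L_{t+1}, Y²_{t+1})` is a fixed function of `(X_t, L_t)`,
`U¹_t`, `U²_t` and the fresh noise `(W_t, V¹_{t+1}, V²_{t+1})`. The fresh noise is independent of
everything up to time `t`: swapping it with an independent copy preserves the law and leaves `X_t`,
`L_t` and `M²_t` unchanged. Moreover `U¹_t = Γ_t (Π¹_t)`, where `Π¹_t` is `Π²_t` conditioned on
`L_t`. Hence the conditional law of the triple given `M²_t` is a function of `(Π²_t, Γ_t, U²_t)`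
alone. Conditioning it on `Y²_{t+1}` gives the filter; averaging over the values of `M²_t`
compatible with `(Π²_t, U²_t, Γ_t)` gives the second claim.
-/

section FiniteProbability

variable {Ω : Type*} [Fintype Ω] {p : Ω → ℝ} {A A' B C : Ω → Prop}

/-- The probability of `B` under the mass function `p`: the denominator of `condProb` and
`condExp`. -/
def prob (p : Ω → ℝ) (B : Ω → Prop) : ℝ :=
  ∑ ω, if B ω then p ω else 0

theorem prob_pos (hp : ∀ ω, 0 ≤ p ω) {ω : Ω} (hω : 0 < p ω) (hB : B ω) : 0 < prob p B :=
  Finset.sum_pos' (fun ω' _ => by split_ifs <;> simp [hp]) ⟨ω, mem_univ ω, by simpa [hB] using hω⟩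

theorem condProb_eq_condExp (p : Ω → ℝ) (A B : Ω → Prop) :
    condProb p A B = condExp p (fun ω => if A ω then 1 else 0) B := by
  simp only [condProb, condExp, mul_ite, mul_one, mul_zero]
  congr 1
  exact sum_congr rfl fun ω _ => by by_cases hB : B ω <;> simp [hB]

theorem condExp_congr (hp : ∀ ω, 0 ≤ p ω) {F G : Ω → ℝ} (h : ∀ ω, 0 < p ω → B ω → F ω = G ω) :
    condExp p F B = condExp p G B := by
  unfold condExp
  congr 1
  refine sum_congr rfl fun ω _ => if_ctx_congr Iff.rfl (fun hB => ?_) fun _ => rfl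
  rcases (hp ω).eq_or_lt with h0 | h0
  · simp only [← h0, zero_mul]
  · rw [h ω h0 hB]

theorem condProb_congr (hp : ∀ ω, 0 ≤ p ω) (h : ∀ ω, 0 < p ω → B ω → (A ω ↔ A' ω)) :
    condProb p A B = condProb p A' B := by
  simp only [condProb_eq_condExp]
  exact condExp_congr hp fun ω hω hB => by simp only [h ω hω hB]

theorem condExp_const (hB : prob p B ≠ 0) (c : ℝ) :
    condExp p (fun _ => c) B = c := by
  simp only [condExp, ← ite_zero_mul, ← sum_mul]
  exact mul_div_cancel_left₀ c hB

theorem condProb_and_right (hB : prob p B ≠ 0) :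
    condProb p A (fun ω => C ω ∧ B ω) = condProb p (fun ω => A ω ∧ C ω) B / condProb p C B := by
  rw [prob] at hB
  simp only [condProb, and_assoc]
  rw [div_div_div_cancel_right₀ hB]
  congr!

theorem finsum_condExp_fiber {α : Type*} (p : Ω → ℝ) (φ : Ω → α) (F : Ω → ℝ) (B : Ω → Prop) :
    ∑ᶠ a, condExp p (fun ω => if φ ω = a then F ω else 0) B = condExp p F B := by
  set G : α → Ω → ℝ := fun a ω => if B ω then p ω * (if φ ω = a then F ω else 0) else 0 with hG
  have hG0 (ω : Ω) (a : α) (ha : a ≠ φ ω) : G a ω = 0 := by simp [hG, ha.symm]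
  have hsupp (ω : Ω) : Function.HasFiniteSupport fun a => G a ω :=
    (Set.finite_singleton (φ ω)).subset fun a ha => by_contra fun h => ha (hG0 ω a h)
  calc ∑ᶠ a, condExp p (fun ω => if φ ω = a then F ω else 0) B
      = (∑ᶠ a, ∑ ω, G a ω) / ∑ ω, if B ω then p ω else 0 := by
        simp only [condExp, div_eq_mul_inv, ← finsum_mul, hG]
    _ = (∑ ω, ∑ᶠ a, G a ω) / ∑ ω, if B ω then p ω else 0 := by
        rw [finsum_sum_comm _ _ fun ω _ => hsupp ω]
    _ = condExp p F B := by
        rw [condExp]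
        congr 1
        refine sum_congr rfl fun ω _ => ?_
        rw [finsum_eq_single _ _ (hG0 ω)]
        simp only [hG, if_true]

theorem finsum_condProb_mul {α : Type*} (p : Ω → ℝ) (φ : Ω → α) (K : α → ℝ) (B : Ω → Prop) :
    ∑ᶠ a, condProb p (fun ω => φ ω = a) B * K a = condExp p (fun ω => K (φ ω)) B := by
  rw [← finsum_condExp_fiber p φ]
  refine finsum_congr fun a => ?_
  rw [condProb, condExp, div_mul_eq_mul_div, sum_mul]
  congr 1
  refine sum_congr rfl fun ω _ => ?_
  by_cases hB : B ω <;> by_cases ha : φ ω = a <;> simp [hB, ha]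

theorem finsum_condProb_and {α : Type*} (p : Ω → ℝ) (φ : Ω → α) (A B : Ω → Prop) :
    ∑ᶠ a, condProb p (fun ω => φ ω = a ∧ A ω) B = condProb p A B := by
  rw [condProb_eq_condExp p A, ← finsum_condExp_fiber p φ]
  refine finsum_congr fun a => ?_
  rw [condProb_eq_condExp]
  congr! 2 with ω
  by_cases ha : φ ω = a <;> simp [ha]

/-- The conditional law of the first coordinate given that the second one is `b`, for a law `π` on
`α × β`. This is `eMap` with a `finsum`, so that `α` may be infinite. -/
def condFst {α β : Type*} (π : α × β → ℝ) (b : β) (a : α) : ℝ :=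
  π (a, b) / ∑ᶠ a', π (a', b)

theorem condFst_condProb {α β : Type*} (hB : prob p B ≠ 0)
    (φ : Ω → α) (χ : Ω → β) (b : β) (a : α) :
    condFst (fun ab => condProb p (fun ω => (φ ω, χ ω) = ab) B) b a =
      condProb p (fun ω => φ ω = a) (fun ω => χ ω = b ∧ B ω) := by
  simp only [condFst, Prod.mk.injEq, finsum_condProb_and, condProb_and_right hB]

theorem condExp_condProb {β : Type*} (hp : ∀ ω, 0 ≤ p ω) {M : Ω → β}
    (hC : ∀ ω ω', M ω = M ω' → (C ω ↔ C ω')) (A : Ω → Prop) :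
    condExp p (fun ω => condProb p A fun ω' => M ω' = M ω) C = condProb p A C := by
  have hterm (ω ω' : Ω) :
      (if C ω then
        p ω * ((if A ω' ∧ M ω' = M ω then p ω' else 0) / prob p fun ω₁ => M ω₁ = M ω) else 0) =
      if A ω' ∧ C ω' then
        p ω' * ((if M ω = M ω' then p ω else 0) / prob p fun ω₁ => M ω₁ = M ω') else 0 := by
    by_cases hM : M ω = M ω'
    · by_cases hA : A ω' <;> by_cases hω' : C ω' <;>
        simp [hM, hA, hω', hC ω ω' hM, mul_div_left_comm]
    · simp [hM, Ne.symm hM]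
  have hfiber (ω' : Ω) :
      p ω' * (prob p (fun ω => M ω = M ω') / prob p fun ω₁ => M ω₁ = M ω') = p ω' := by
    rcases (hp ω').eq_or_lt with h0 | h0
    · rw [← h0, zero_mul]
    · rw [div_self (prob_pos (B := fun ω => M ω = M ω') hp h0 rfl).ne', mul_one]
  rw [condExp, condProb]
  congr 1
  calc ∑ ω, (if C ω then p ω * condProb p A (fun ω' => M ω' = M ω) else 0)
      = ∑ ω, ∑ ω', if C ω then
          p ω * ((if A ω' ∧ M ω' = M ω then p ω' else 0) / prob p fun ω₁ => M ω₁ = M ω)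
          else 0 := by
        refine sum_congr rfl fun ω _ => ?_
        by_cases hω : C ω
        · simp only [hω, if_true, ← mul_sum, ← sum_div]
          rfl
        · simp only [hω, if_false, sum_const_zero]
    _ = ∑ ω', ∑ ω, if A ω' ∧ C ω' then
          p ω' * ((if M ω = M ω' then p ω else 0) / prob p fun ω₁ => M ω₁ = M ω') else 0 := by
        rw [sum_comm]
        simp only [hterm]
    _ = ∑ ω', if A ω' ∧ C ω' then p ω' else 0 := by
        refine sum_congr rfl fun ω' _ => ?_
        split_ifs with h
        · rw [← mul_sum, ← sum_div]
          exact hfiber ω'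
        · exact sum_const_zero

theorem condProb_eq_of_forall_fiber {β : Type*} (hp : ∀ ω, 0 ≤ p ω) {M : Ω → β}
    (hC : ∀ ω ω', M ω = M ω' → (C ω ↔ C ω')) {c : ℝ}
    (hC0 : prob p C ≠ 0)
    (h : ∀ ω, 0 < p ω → C ω → condProb p A (fun ω' => M ω' = M ω) = c) :
    condProb p A C = c := by
  rw [← condExp_condProb hp hC, condExp_congr hp h, condExp_const hC0]

variable {N : Type*} [Fintype N] {q : N → ℝ} {r : Ω → N → Ω} {c : Ω → N}

/-- `r ω b` replaces the component `c ω` of `ω` by `b`; the involution `hrc` swaps that component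
with an independent copy. -/
theorem sum_mul_eq_sum_mul_resample
    (hrc : Function.Involutive fun x : Ω × N => (r x.1 x.2, c x.1))
    (hpq : ∀ ω b, p (r ω b) * q (c ω) = p ω * q b) (hq : ∑ b, q b = 1) (F : Ω → ℝ) :
    ∑ ω, p ω * F ω = ∑ ω, p ω * ∑ b, q b * F (r ω b) :=
  calc ∑ ω, p ω * F ω = ∑ x : Ω × N, p x.1 * q x.2 * F x.1 := by
        simp only [Fintype.sum_prod_type, ← sum_mul, ← mul_sum, hq, mul_one]
    _ = ∑ x : Ω × N, p (r x.1 x.2) * q (c x.1) * F (r x.1 x.2) :=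
        (Equiv.sum_comp hrc.toPerm fun x => p x.1 * q x.2 * F x.1).symm
    _ = ∑ ω, p ω * ∑ b, q b * F (r ω b) := by
        simp only [hpq, Fintype.sum_prod_type, mul_sum, mul_assoc]

theorem condProb_eq_condExp_resample
    (hrc : Function.Involutive fun x : Ω × N => (r x.1 x.2, c x.1))
    (hpq : ∀ ω b, p (r ω b) * q (c ω) = p ω * q b) (hq : ∑ b, q b = 1)
    (hB : ∀ ω b, B (r ω b) ↔ B ω) (A : Ω → Prop) :
    condProb p A B = condExp p (fun ω => ∑ b, if A (r ω b) then q b else 0) B := by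
  have h := sum_mul_eq_sum_mul_resample hrc hpq hq fun ω => if A ω ∧ B ω then 1 else 0
  simp only [hB, mul_ite, mul_one, mul_zero] at h
  rw [condProb, condExp, h]
  congr 1
  refine sum_congr rfl fun ω _ => ?_
  by_cases hω : B ω <;> simp [hω]

end FiniteProbability

/-- The primitives that act between the times `t` and `t + 1`: the disturbance `W_t` and the
measurement noises `V¹_{t+1}`, `V²_{t+1}`. -/
abbrev FreshNoise (W V1 V2 : ℕ → Type) (t : ℕ) : Type :=
  W t × V1 (t + 1) × V2 (t + 1)

/-- The memory at time `t + 1` made of a memory at time `t`, a new observation and the last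
action. It serves `M²` as well as `L^{[1,2]}`, since `M2 Y2 U2` is `Lp Y2 U2`. -/
def Lp.snoc {Y U : ℕ → Type} {t : ℕ} (l : Lp Y U t) (y : Y (t + 1)) (a : U t) : Lp Y U (t + 1) :=
  (Fin.snoc (α := fun s : Fin (t + 2) => Y s) l.1 y,
    Fin.snoc (α := fun s : Fin (t + 1) => U s) l.2 a)

theorem Lp.eq_snoc {Y U : ℕ → Type} {t : ℕ} {l : Lp Y U (t + 1)} {l' : Lp Y U t} {y : Y (t + 1)}
    {a : U t} (hl₁ : ∀ s, l.1 (Fin.castSucc s) = l'.1 s) (hy : l.1 (Fin.last (t + 1)) = y)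
    (hl₂ : ∀ s, l.2 (Fin.castSucc s) = l'.2 s) (ha : l.2 (Fin.last t) = a) :
    l = l'.snoc y a := by
  refine Prod.ext (funext <| Fin.lastCases ?_ fun s => ?_)
    (funext <| Fin.lastCases ?_ fun s => ?_) <;>
    simp only [Lp.snoc, Fin.snoc_last, Fin.snoc_castSucc, hl₁, hy, hl₂, ha]

theorem Lp.snoc_inj {Y U : ℕ → Type} {t : ℕ} {l l' : Lp Y U t} {y y' : Y (t + 1)} {a a' : U t} :
    l.snoc y a = l'.snoc y' a' ↔ l = l' ∧ y = y' ∧ a = a' := by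
  simp only [Lp.snoc, Prod.ext_iff, Fin.snoc_inj]
  tauto

/-- The one-step kernel of the team: the triple `((X_{t+1}, L_{t+1}), Y²_{t+1})` as a function of
`(X_t, L_t)`, the actions `U¹_t`, `U²_t` and the fresh noise. -/
def oneStep (S : Sys X U1 U2 W V1 V2 Y1 Y2) {t : ℕ} (xl : X t × Lp Y1 U1 t) (a1 : U1 t)
    (a2 : U2 t) (b : FreshNoise W V1 V2 t) : (X (t + 1) × Lp Y1 U1 (t + 1)) × Y2 (t + 1) :=
  let x' := S.f t xl.1 a1 a2 b.1
  ((x', xl.2.snoc (S.h1 (t + 1) x' b.2.1) a1), S.h2 (t + 1) x' b.2.2)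

/-- Replacing the fresh noise of the step from `t` to `t + 1` in a realization of the primitives. -/
def Prim.refresh {t : ℕ} (ρ : Prim X W V1 V2) (b : FreshNoise W V1 V2 t) : Prim X W V1 V2 where
  x0 := ρ.x0
  w := Function.update ρ.w t b.1
  v1 := Function.update ρ.v1 (t + 1) b.2.1
  v2 := Function.update ρ.v2 (t + 1) b.2.2

section Trajectories

omit [Fintype (X 0)] [∀ t, Fintype (W t)] [∀ t, Fintype (V1 t)] [∀ t, Fintype (V2 t)]
omit [∀ t, Inhabited (W t)] [∀ t, Inhabited (V1 t)] [∀ t, Inhabited (V2 t)]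

variable (S : Sys X U1 U2 W V1 V2 Y1 Y2) (g : Strat U1 U2 Y1 Y2) (ρ : Prim X W V1 V2) {t : ℕ}

theorem xTraj_succ (t : ℕ) : xTraj S g ρ (t + 1) =
    S.f t (xTraj S g ρ t) (u1Traj S g ρ t) (u2Traj S g ρ t) (ρ.w t) :=
  Fin.snoc_last (α := fun s : Fin (t + 2) => X s) _ _

theorem lpTraj_succ (t : ℕ) : lpTraj S g ρ (t + 1) =
    (lpTraj S g ρ t).snoc (y1Traj S g ρ (t + 1)) (u1Traj S g ρ t) :=
  Lp.eq_snoc (fun s => by simp only [lpTraj, hist, Fin.snoc_castSucc]; rfl) rfl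
    (fun s => by simp only [lpTraj, hist, Fin.snoc_castSucc])
    (by simp only [lpTraj, hist, Fin.snoc_last]; rfl)

theorem m2Traj_succ (t : ℕ) : m2Traj S g ρ (t + 1) =
    Lp.snoc (m2Traj S g ρ t) (y2Traj S g ρ (t + 1)) (u2Traj S g ρ t) :=
  Lp.eq_snoc (fun s => by simp only [m2Traj, hist, Fin.snoc_castSucc]; rfl) rfl
    (fun s => by simp only [m2Traj, hist, Fin.snoc_castSucc])
    (by simp only [m2Traj, hist, Fin.snoc_last]; rfl)

theorem u2Traj_congr {ρ ρ' : Prim X W V1 V2} (h : m2Traj S g ρ t = m2Traj S g ρ' t) :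
    u2Traj S g ρ t = u2Traj S g ρ' t :=
  congrArg (g.g2 t) h

theorem m2Traj_succ_eq_iff (ρ' : Prim X W V1 V2) :
    m2Traj S g ρ (t + 1) = m2Traj S g ρ' (t + 1) ↔
      y2Traj S g ρ (t + 1) = y2Traj S g ρ' (t + 1) ∧ m2Traj S g ρ t = m2Traj S g ρ' t := by
  rw [m2Traj_succ, m2Traj_succ, Lp.snoc_inj]
  exact ⟨fun h => ⟨h.2.1, h.1⟩, fun h => ⟨h.2, h.1, u2Traj_congr S g h.2⟩⟩

theorem oneStep_traj (t : ℕ) :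
    ((xTraj S g ρ (t + 1), lpTraj S g ρ (t + 1)), y2Traj S g ρ (t + 1)) =
      oneStep S (xTraj S g ρ t, lpTraj S g ρ t) (u1Traj S g ρ t) (u2Traj S g ρ t)
        (ρ.w t, ρ.v1 (t + 1), ρ.v2 (t + 1)) := by
  simp only [oneStep, lpTraj_succ, y1Traj, y2Traj, xTraj_succ]

theorem hist_refresh (b : FreshNoise W V1 V2 t) {s : ℕ} (hs : s ≤ t) :
    hist S g (ρ.refresh b) s = hist S g ρ s := by
  induction s with
  | zero => rfl
  | succ s ih =>
    have hv (r : Fin (s + 1)) : (r : ℕ) ≠ t + 1 := by omega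
    have hw : s ≠ t := by omega
    simp only [hist, ih (by omega)]
    simp only [Prim.refresh, Function.update_of_ne (hv _), Function.update_of_ne hw]

theorem xTraj_refresh (b : FreshNoise W V1 V2 t) :
    xTraj S g (ρ.refresh b) t = xTraj S g ρ t := by
  rw [xTraj, hist_refresh S g ρ b le_rfl, xTraj]

theorem m1Traj_refresh (b : FreshNoise W V1 V2 t) :
    m1Traj S g (ρ.refresh b) t = m1Traj S g ρ t := by
  have hv (r : Fin (t + 1)) : (r : ℕ) ≠ t + 1 := r.2.ne
  simp only [m1Traj, lpTraj, m2Traj, hist_refresh S g ρ b le_rfl]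
  simp only [Prim.refresh, Function.update_of_ne (hv _)]

theorem m2Traj_refresh (b : FreshNoise W V1 V2 t) :
    m2Traj S g (ρ.refresh b) t = m2Traj S g ρ t :=
  congrArg Prod.snd (m1Traj_refresh S g ρ b)

theorem oneStep_traj_refresh (b : FreshNoise W V1 V2 t) :
    ((xTraj S g (ρ.refresh b) (t + 1), lpTraj S g (ρ.refresh b) (t + 1)),
        y2Traj S g (ρ.refresh b) (t + 1)) =
      oneStep S (xTraj S g ρ t, lpTraj S g ρ t) (u1Traj S g ρ t) (u2Traj S g ρ t) b := by
  have hlp : lpTraj S g (ρ.refresh b) t = lpTraj S g ρ t :=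
    congrArg Prod.fst (m1Traj_refresh S g ρ b)
  rw [oneStep_traj, xTraj_refresh, hlp, u1Traj, m1Traj_refresh, u2Traj, m2Traj_refresh]
  simp only [Prim.refresh, Function.update_self, u1Traj, u2Traj]

end Trajectories

section SampleSpace

/-- The sample point obtained from `ω` by replacing the fresh noise of the step from `t` to
`t + 1`. -/
def resample {T t : ℕ} (ht : t < T) (ω : ΩT X W V1 V2 T) (b : FreshNoise W V1 V2 t) :
    ΩT X W V1 V2 T :=
  (ω.1, Function.update ω.2.1 ⟨t, by omega⟩ b.1,
    Function.update ω.2.2.1 ⟨t + 1, by omega⟩ b.2.1,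
    Function.update ω.2.2.2 ⟨t + 1, by omega⟩ b.2.2)

/-- The fresh noise of the step from `t` to `t + 1` at a sample point. -/
def freshNoise {T t : ℕ} (ht : t < T) (ω : ΩT X W V1 V2 T) : FreshNoise W V1 V2 t :=
  (ω.2.1 ⟨t, by omega⟩, ω.2.2.1 ⟨t + 1, by omega⟩, ω.2.2.2 ⟨t + 1, by omega⟩)

/-- The joint mass function of the fresh noise of the step from `t` to `t + 1`. -/
def freshMass (P : PrimPMF X W V1 V2) {t : ℕ} (b : FreshNoise W V1 V2 t) : ℝ :=
  P.pW t b.1 * P.pV1 (t + 1) b.2.1 * P.pV2 (t + 1) b.2.2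

theorem ext_update {α : ℕ → Type} [∀ t, Inhabited (α t)] {T t : ℕ} (ht : t < T + 1)
    (a : (t : Fin (T + 1)) → α t) (b : α t) :
    ext T (Function.update a ⟨t, ht⟩ b) = Function.update (ext T a) t b := by
  funext s
  by_cases hs : s = t
  · subst hs
    simp [ext, ht]
  · have hne (h : s < T + 1) : (⟨s, h⟩ : Fin (T + 1)) ≠ ⟨t, ht⟩ := fun e => hs (Fin.mk.inj e)
    simp only [ext, Function.update_of_ne hs, Function.update_of_ne (hne _)]

theorem prod_apply_update_mul {ι R : Type*} [Fintype ι] [DecidableEq ι] [CommMonoid R]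
    {α : ι → Type*} (p : ∀ i, α i → R) (a : ∀ i, α i) (j : ι) (b : α j) :
    (∏ i, p i (Function.update a j b i)) * p j (a j) = (∏ i, p i (a i)) * p j b := by
  simp only [Function.apply_update p, prod_update_of_mem (mem_univ j)]
  rw [← mul_prod_erase univ (fun i => p i (a i)) (mem_univ j), sdiff_singleton_eq_erase]
  ac_rfl

omit [Fintype (X 0)] [∀ t, Fintype (W t)] [∀ t, Fintype (V1 t)] [∀ t, Fintype (V2 t)] in
theorem toPrim_resample {T t : ℕ} (ht : t < T) (ω : ΩT X W V1 V2 T) (b : FreshNoise W V1 V2 t) :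
    toPrim T (resample ht ω b) = (toPrim T ω).refresh b := by
  simp only [toPrim, resample, Prim.refresh, ext_update]

omit [∀ t, Inhabited (W t)] [∀ t, Inhabited (V1 t)] [∀ t, Inhabited (V2 t)]

omit [Fintype (X 0)] [∀ t, Fintype (W t)] [∀ t, Fintype (V1 t)] [∀ t, Fintype (V2 t)] in
theorem resample_involutive {T t : ℕ} (ht : t < T) : Function.Involutive
    fun x : ΩT X W V1 V2 T × FreshNoise W V1 V2 t =>
      (resample ht x.1 x.2, freshNoise ht x.1) := by
  intro x
  simp [resample, freshNoise]

theorem mass_nonneg (P : PrimPMF X W V1 V2) (T : ℕ) (ω : ΩT X W V1 V2 T) : 0 ≤ mass P T ω :=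
  mul_nonneg (mul_nonneg (mul_nonneg (P.pX0_nonneg _) (prod_nonneg fun t _ => P.pW_nonneg t _))
    (prod_nonneg fun t _ => P.pV1_nonneg t _)) (prod_nonneg fun t _ => P.pV2_nonneg t _)

theorem mass_resample (P : PrimPMF X W V1 V2) {T t : ℕ} (ht : t < T) (ω : ΩT X W V1 V2 T)
    (b : FreshNoise W V1 V2 t) :
    mass P T (resample ht ω b) * freshMass P (freshNoise ht ω) = mass P T ω * freshMass P b := by
  have hw := prod_apply_update_mul (fun i : Fin (T + 1) => P.pW i) ω.2.1 ⟨t, by omega⟩ b.1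
  have hv1 := prod_apply_update_mul (fun i : Fin (T + 1) => P.pV1 i) ω.2.2.1
    ⟨t + 1, by omega⟩ b.2.1
  have hv2 := prod_apply_update_mul (fun i : Fin (T + 1) => P.pV2 i) ω.2.2.2
    ⟨t + 1, by omega⟩ b.2.2
  have h := congrArg (P.pX0 ω.1 * ·) (congrArg₂ (· * ·) (congrArg₂ (· * ·) hw hv1) hv2)
  dsimp only at h
  simp only [mass, freshMass, resample, freshNoise]
  linear_combination h

theorem sum_freshMass (P : PrimPMF X W V1 V2) (t : ℕ) :
    ∑ b : FreshNoise W V1 V2 t, freshMass P b = 1 := by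
  simp only [freshMass, Fintype.sum_prod_type, ← mul_sum, P.pV2_sum, P.pV1_sum, P.pW_sum, mul_one]

end SampleSpace

section Filter

variable (S : Sys X U1 U2 W V1 V2 Y1 Y2) (P : PrimPMF X W V1 V2)

/-- The probability, predicted at time `t` from `Π²_t = π`, `Γ_t = γ` and `U²_t = u`, that the
triple `((X_{t+1}, L_{t+1}), Y²_{t+1})` satisfies `A`. -/
def predict {t : ℕ} (π : X t × Lp Y1 U1 t → ℝ) (γ : (X t → ℝ) → U1 t) (u : U2 t)
    (A : (X (t + 1) × Lp Y1 U1 (t + 1)) × Y2 (t + 1) → Prop) : ℝ :=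
  ∑ᶠ xl, π xl * ∑ b, if A (oneStep S xl (γ (condFst π xl.2)) u b) then freshMass P b else 0

/-- The filter `f̃²_t`: the predicted law of `(X_{t+1}, L_{t+1})` conditioned on `Y²_{t+1}`. -/
def bayesFilter (t : ℕ) (π : X t × Lp Y1 U1 t → ℝ) (γ : (X t → ℝ) → U1 t) (u : U2 t)
    (z : Y2 (t + 1) × U2 t) (xl : X (t + 1) × Lp Y1 U1 (t + 1)) : ℝ :=
  predict S P π γ u (fun o => o.1 = xl ∧ o.2 = z.1) / predict S P π γ u (fun o => o.2 = z.1)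

variable {S P} {g : Strat U1 U2 Y1 Y2} {T t : ℕ}

theorem infoState2_congr {ω ω' : ΩT X W V1 V2 T}
    (h : m2Traj S g (toPrim T ω) t = m2Traj S g (toPrim T ω') t) :
    infoState2 S g P T ω t = infoState2 S g P T ω' t := by
  unfold infoState2
  rw [h]

theorem prob_m2Traj_eq_ne_zero {ω : ΩT X W V1 V2 T} (hω : 0 < mass P T ω) :
    prob (mass P T) (fun ω' => m2Traj S g (toPrim T ω') t = m2Traj S g (toPrim T ω) t) ≠ 0 :=
  (prob_pos (B := fun ω' => m2Traj S g (toPrim T ω') t = m2Traj S g (toPrim T ω) t)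
    (mass_nonneg P T) hω rfl).ne'

theorem condFst_infoState2 {ω : ΩT X W V1 V2 T} (hω : 0 < mass P T ω) :
    condFst (infoState2 S g P T ω t) (lpTraj S g (toPrim T ω) t) = infoState1 S g P T ω t := by
  funext x
  simp only [infoState1, m1Traj, Prod.mk.injEq]
  exact condFst_condProb (prob_m2Traj_eq_ne_zero hω) _ _ _ _

variable {ψ : ∀ t, M2 Y2 U2 t → (X t → ℝ) → U1 t} (hψ : Compat S g ψ P T) (ht : t < T)
  {ω : ΩT X W V1 V2 T}

include hψ ht

theorem condProb_oneStep_eq_predict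
    (A : (X (t + 1) × Lp Y1 U1 (t + 1)) × Y2 (t + 1) → Prop) :
    condProb (mass P T)
        (fun ω' => A ((xTraj S g (toPrim T ω') (t + 1), lpTraj S g (toPrim T ω') (t + 1)),
          y2Traj S g (toPrim T ω') (t + 1)))
        (fun ω' => m2Traj S g (toPrim T ω') t = m2Traj S g (toPrim T ω) t) =
      predict S P (infoState2 S g P T ω t) (ψ t (m2Traj S g (toPrim T ω) t))
        (u2Traj S g (toPrim T ω) t) A := by
  rw [condProb_eq_condExp_resample (resample_involutive ht) (mass_resample P ht)
    (sum_freshMass P t) fun ω' b => by rw [toPrim_resample, m2Traj_refresh]]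
  refine Eq.trans (condExp_congr (mass_nonneg P T) fun ω' hω' hm => ?_)
    (finsum_condProb_mul (mass P T)
      (fun ω' => (xTraj S g (toPrim T ω') t, lpTraj S g (toPrim T ω') t)) _ _).symm
  have hu1 : u1Traj S g (toPrim T ω') t = ψ t (m2Traj S g (toPrim T ω) t)
      (condFst (infoState2 S g P T ω t) (lpTraj S g (toPrim T ω') t)) := by
    rw [hψ t ht.le ω' hω', ← condFst_infoState2 hω', hm, infoState2_congr hm]
  simp only [toPrim_resample, oneStep_traj_refresh, u2Traj_congr S g hm, hu1]

theorem infoState2_succ (hω : 0 < mass P T ω) :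
    infoState2 S g P T ω (t + 1) =
      bayesFilter S P t (infoState2 S g P T ω t) (ψ t (m2Traj S g (toPrim T ω) t))
        (u2Traj S g (toPrim T ω) t) (z2Traj S g (toPrim T ω) t) := by
  funext xl
  simp only [infoState2, m2Traj_succ_eq_iff]
  rw [condProb_and_right (prob_m2Traj_eq_ne_zero hω)]
  exact congrArg₂ (· / ·)
    (condProb_oneStep_eq_predict hψ ht fun o => o.1 = xl ∧ o.2 = y2Traj S g _ (t + 1))
    (condProb_oneStep_eq_predict hψ ht fun o => o.2 = y2Traj S g _ (t + 1))

theorem condProb_infoState2_succ_mem (P2 : Set (X (t + 1) × Lp Y1 U1 (t + 1) → ℝ)) :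
    condProb (mass P T) (fun ω' => infoState2 S g P T ω' (t + 1) ∈ P2)
        (fun ω' => m2Traj S g (toPrim T ω') t = m2Traj S g (toPrim T ω) t) =
      predict S P (infoState2 S g P T ω t) (ψ t (m2Traj S g (toPrim T ω) t))
        (u2Traj S g (toPrim T ω) t) fun o =>
          bayesFilter S P t (infoState2 S g P T ω t) (ψ t (m2Traj S g (toPrim T ω) t))
            (u2Traj S g (toPrim T ω) t) (o.2, u2Traj S g (toPrim T ω) t) ∈ P2 := by
  rw [← condProb_oneStep_eq_predict hψ ht]
  refine condProb_congr (mass_nonneg P T) fun ω' hω' hm => ?_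
  rw [infoState2_succ hψ ht hω', z2Traj, infoState2_congr hm, u2Traj_congr S g hm, hm]

end Filter

theorem infoState2_filter_general (T : ℕ) (S : Sys X U1 U2 W V1 V2 Y1 Y2)
    (P : PrimPMF X W V1 V2) :
    ∃ ftil : ∀ t, (X t × Lp Y1 U1 t → ℝ) → ((X t → ℝ) → U1 t) → U2 t →
        (Y2 (t + 1) × U2 t) → (X (t + 1) × Lp Y1 U1 (t + 1) → ℝ),
      ∀ (g : Strat U1 U2 Y1 Y2) (ψ : ∀ t, M2 Y2 U2 t → (X t → ℝ) → U1 t),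
        Compat S g ψ P T →
        ∀ t, t < T → ∀ ω : ΩT X W V1 V2 T, 0 < mass P T ω →
          (infoState2 S g P T ω (t + 1) =
            ftil t (infoState2 S g P T ω t) (ψ t (m2Traj S g (toPrim T ω) t))
              (u2Traj S g (toPrim T ω) t) (z2Traj S g (toPrim T ω) t)) ∧
          ∀ P2 : Set (X (t + 1) × Lp Y1 U1 (t + 1) → ℝ),
            condProb (mass P T) (fun ω' => infoState2 S g P T ω' (t + 1) ∈ P2)
              (fun ω' => m2Traj S g (toPrim T ω') t = m2Traj S g (toPrim T ω) t) =
            condProb (mass P T) (fun ω' => infoState2 S g P T ω' (t + 1) ∈ P2)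
              (fun ω' => infoState2 S g P T ω' t = infoState2 S g P T ω t ∧
                u2Traj S g (toPrim T ω') t = u2Traj S g (toPrim T ω) t ∧
                ψ t (m2Traj S g (toPrim T ω') t) = ψ t (m2Traj S g (toPrim T ω) t)) := by
  refine ⟨bayesFilter S P, fun g ψ hψ t ht ω hω => ⟨infoState2_succ hψ ht hω, fun P2 => ?_⟩⟩
  rw [condProb_infoState2_succ_mem hψ ht]
  refine (condProb_eq_of_forall_fiber (M := fun ω' => m2Traj S g (toPrim T ω') t)
    (mass_nonneg P T) (fun ω₁ ω₂ hm => ?_) (prob_pos (mass_nonneg P T) hω ⟨rfl, rfl, rfl⟩).ne'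
    fun ω' _ ⟨hπ, hu, hγ⟩ => ?_).symm
  · rw [infoState2_congr hm, u2Traj_congr S g hm, hm]
  · rw [condProb_infoState2_succ_mem hψ ht, hπ, hu, hγ]

/-- Lemma 5 of the paper. There is a strategy-independent filter
`f̃²_t` with `Π²_{t+1} = f̃²_t (Π²_t, Γ_t^{[2,1]}, U²_t, Z²_{t+1})` along every
realization of positive probability; consequently, for every (Borel) set `P²` of
distributions, `P(Π²_{t+1} ∈ P² | M²_t, Γ_{0:t}^{[2,1]}) =
P(Π²_{t+1} ∈ P² | Π²_t, U²_t, Γ_t^{[2,1]})`. -/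
theorem infoState2_filter
    [∀ t, Fintype (X t)] [∀ t, Fintype (U1 t)] [∀ t, Fintype (U2 t)]
    [∀ t, Fintype (Y1 t)] [∀ t, Fintype (Y2 t)]
    (T : ℕ) (S : Sys X U1 U2 W V1 V2 Y1 Y2) (P : PrimPMF X W V1 V2) :
    ∃ ftil : ∀ t, (X t × Lp Y1 U1 t → ℝ) → ((X t → ℝ) → U1 t) → U2 t →
        (Y2 (t + 1) × U2 t) → (X (t + 1) × Lp Y1 U1 (t + 1) → ℝ),
      ∀ (g : Strat U1 U2 Y1 Y2) (ψ : ∀ t, M2 Y2 U2 t → (X t → ℝ) → U1 t),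
        Compat S g ψ P T →
        ∀ t, t < T → ∀ ω : ΩT X W V1 V2 T, 0 < mass P T ω →
          (infoState2 S g P T ω (t + 1) =
            ftil t (infoState2 S g P T ω t) (ψ t (m2Traj S g (toPrim T ω) t))
              (u2Traj S g (toPrim T ω) t) (z2Traj S g (toPrim T ω) t)) ∧
          ∀ P2 : Set (X (t + 1) × Lp Y1 U1 (t + 1) → ℝ),
            condProb (mass P T) (fun ω' => infoState2 S g P T ω' (t + 1) ∈ P2)
              (fun ω' => m2Traj S g (toPrim T ω') t = m2Traj S g (toPrim T ω) t) =
            condProb (mass P T) (fun ω' => infoState2 S g P T ω' (t + 1) ∈ P2)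
              (fun ω' => infoState2 S g P T ω' t = infoState2 S g P T ω t ∧
                u2Traj S g (toPrim T ω') t = u2Traj S g (toPrim T ω) t ∧
                ψ t (m2Traj S g (toPrim T ω') t) = ψ t (m2Traj S g (toPrim T ω) t)) :=
  infoState2_filter_general T S P

end

end NestedTeam
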